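/- Let a > 0, b > 0, c > 0 be real numbers with b > a, c > a and c ≥ max(3a + 1/2 − b, a + a/(2(b−a))), and suppose (b,c) is neither (a+1/2, 2a) nor (2a, a+1/2). Then for every x > 0, the generalized hypergeometric function Φ(x) = ₁F₂(a; b, c; −x²/4) = Σ_{k=0}^{∞} (a)_k / (k! (b)_k (c)_k) · (−x²/4)^k is strictly positive. -/

import Mathlib

/-- Pochhammer symbol `(a)_k = a (a+1) ⋯ (a+k-1)` for a real number `a`. -/
noncomputable def poch (a : ℝ) (k : ℕ) : ℝ := ∏ i ∈ Finset.range k, (a + i)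

/-- The generalized hypergeometric series `₁F₂(a; b, c; z)`. -/
noncomputable def oneF2 (a b c z : ℝ) : ℝ :=
  ∑' k : ℕ, poch a k / ((k.factorial : ℝ) * poch b k * poch c k) * z ^ k


lemma poch_zero (x : ℝ) : poch x 0 = 1 := by simp [poch]

lemma poch_one (x : ℝ) : poch x 1 = x := by simp [poch]

lemma poch_succ (x : ℝ) (k : ℕ) : poch x (k + 1) = poch x k * (x + k) := by
  simp [poch, Finset.prod_range_succ]

lemma poch_succ_left (x : ℝ) (k : ℕ) : poch x (k + 1) = x * poch (x + 1) k := by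
  simp only [poch, Finset.prod_range_succ']
  rw [mul_comm]
  congr 1
  · simp
  · apply Finset.prod_congr rfl
    intro i _
    push_cast
    ring

lemma poch_add (x : ℝ) (m k : ℕ) : poch x (m + k) = poch x m * poch (x + m) k := by
  induction k with
  | zero => simp [poch_zero]
  | succ k ih => rw [← add_assoc, poch_succ, ih, poch_succ]; push_cast; ring

lemma poch_pos {x : ℝ} (hx : 0 < x) (k : ℕ) : 0 < poch x k :=
  Finset.prod_pos fun i _ => by positivity

lemma poch_nonneg {x : ℝ} (hx : 0 ≤ x) (k : ℕ) : 0 ≤ poch x k :=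
  Finset.prod_nonneg fun i _ => by positivity

lemma poch_refl (x y : ℝ) (k : ℕ) (h : x + y + k = 1) : (-1) ^ k * poch x k = poch y k := by
  induction k generalizing x with
  | zero => simp [poch_zero]
  | succ k ih =>
    push_cast at h
    have := ih (x + 1) (by linarith)
    rw [poch_succ_left, poch_succ, ← this]
    have : y + k = -x := by linarith
    rw [this]; ring

/-- Saalschuetz in polynomial form. -/
lemma saal_poly (x y z : ℝ) (k : ℕ) :
    ∑ j ∈ Finset.range (k + 1), (k.choose j : ℝ) * poch x j * poch y j * poch (z - x - y) (k - j)
      * poch (z + j) (k - j) = poch (z - x) k * poch (z - y) k := by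
  induction k with
  | zero => simp [poch_zero]
  | succ k ih =>
    rw [poch_succ, poch_succ]
    have hR : poch (z - x) k * (z - x + k) * (poch (z - y) k * (z - y + k))
      = (z - x + k) * (z - y + k) * (poch (z - x) k * poch (z - y) k) := by ring
    rw [hR, ← ih, Finset.mul_sum]
    -- telescoping function
    let G : ℕ → ℝ := fun j => match j with
      | 0 => 0
      | j + 1 => -((k.choose j : ℝ) * poch x (j + 1) * poch y (j + 1) *
          poch (z - x - y) (k - j) * poch (z + j) (k - j))
    have hG : ∀ j ∈ Finset.range (k + 1),
        ((k + 1).choose j : ℝ) * poch x j * poch y j * poch (z - x - y) (k + 1 - j)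
          * poch (z + j) (k + 1 - j)
        = (z - x + k) * (z - y + k) * ((k.choose j : ℝ) * poch x j * poch y j *
          poch (z - x - y) (k - j) * poch (z + j) (k - j)) + (G (j + 1) - G j) := by
      intro j hj
      have hjk : j ≤ k := by simpa [Nat.lt_succ_iff] using hj
      obtain ⟨d, rfl⟩ := Nat.exists_eq_add_of_le hjk
      have e1 : j + d + 1 - j = d + 1 := by omega
      have e2 : j + d - j = d := by omega
      cases j with
      | zero =>
        simp only [G, e2, e1, Nat.choose_zero_right, poch_zero, poch_one, zero_add, poch_succ,
          Nat.sub_zero, Nat.cast_zero]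
        push_cast
        ring
      | succ i =>
        have e3 : i + 1 + d - i = d + 1 := by omega
        simp only [G, e2, e1, e3]
        have hc : ((i + 1 + d).choose i : ℝ) * (d + 1) = ((i + 1 + d).choose (i + 1) : ℝ) * (i + 1) := by
          have := Nat.choose_succ_right_eq (i + 1 + d) i
          rw [e3] at this
          exact_mod_cast this.symm
        have hp : poch (z + i) (d + 1) = (z + i) * poch (z + (i + 1 : ℕ)) d := by
          rw [poch_succ_left]; congr 2; push_cast; ring
        rw [hp, Nat.choose_succ_succ (i + 1 + d) i, poch_succ _ d, poch_succ _ d,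
          poch_succ x (i + 1), poch_succ y (i + 1)]
        push_cast
        linear_combination (poch x (i + 1) * poch y (i + 1) * poch (z - x - y) d *
          poch (z + (i + 1)) d * (z - x - y + d)) * hc
    rw [Finset.sum_range_succ, Finset.sum_congr rfl hG, Finset.sum_add_distrib,
      Finset.sum_range_sub]
    simp [G, poch_zero]

lemma saal (x y z : ℝ) (hz : 0 < z) (k : ℕ) :
    ∑ j ∈ Finset.range (k + 1), (k.choose j : ℝ) * poch x j * poch y j * poch (z - x - y) (k - j)
      / poch z j = poch (z - x) k * poch (z - y) k / poch z k := by
  rw [← saal_poly, Finset.sum_div]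
  apply Finset.sum_congr rfl
  intro j hj
  have hjk : j ≤ k := by simpa [Nat.lt_succ_iff] using hj
  obtain ⟨d, rfl⟩ := Nat.exists_eq_add_of_le hjk
  have e2 : j + d - j = d := by omega
  rw [e2, poch_add]
  have h1 := (poch_pos hz j).ne'
  have h2 := (poch_pos (show 0 < z + j by positivity) d).ne'
  field_simp

lemma saal2 (A σ E F : ℝ) (hE : 0 < E) (hF : 0 < F) (N : ℕ) (h : E + F + N = A + σ + 1) :
    ∑ i ∈ Finset.range (N + 1), (-1) ^ i * (N.choose i : ℝ) * poch A i * poch σ i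
      / (poch E i * poch F i) = poch (E - A) N * poch (F - A) N / (poch E N * poch F N) := by
  have h1 := saal A σ E hE N
  have h2 : poch (E - σ) N = (-1) ^ N * poch (F - A) N := by
    rw [poch_refl (F - A) (E - σ) N (by linarith)]
  rw [h2] at h1
  have h3 : poch (E - A) N * poch (F - A) N / (poch E N * poch F N)
     = (-1) ^ N * (poch (E - A) N * ((-1) ^ N * poch (F - A) N) / poch E N) / poch F N := by
    have : ((-1 : ℝ) ^ N) * (-1) ^ N = 1 := by rw [← mul_pow]; simp
    have a1 := (poch_pos hE N).ne'
    have a2 := (poch_pos hF N).ne'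
    field_simp
    rw [pow_two, this, mul_one]
  rw [h3, ← h1, Finset.mul_sum, Finset.sum_div]
  apply Finset.sum_congr rfl
  intro j hj
  have hjk : j ≤ N := by simpa [Nat.lt_succ_iff] using hj
  obtain ⟨d, rfl⟩ := Nat.exists_eq_add_of_le hjk
  have e2 : j + d - j = d := by omega
  push_cast at h
  rw [e2, ← poch_refl (F + j) (E - A - σ) d (by linarith), poch_add F]
  have a1 := (poch_pos hE j).ne'
  have a2 := (poch_pos hF j).ne'
  have a3 := (poch_pos (show 0 < F + j by positivity) d).ne'
  have : ((-1 : ℝ) ^ d) * (-1) ^ d = 1 := by rw [← mul_pow]; simp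
  field_simp
  rw [pow_add]
  linear_combination (-poch A j * poch σ j * (-1) ^ j) * ((j + d).choose j : ℝ) * this

lemma whipple (A B C D E F : ℝ) (hD : 0 < D) (hE : 0 < E) (hF : 0 < F) (n : ℕ)
    (h : D + E + F + n = A + B + C + 1) :
    ∑ k ∈ Finset.range (n + 1), (-1) ^ k * (n.choose k : ℝ) * poch A k * poch B k * poch C k
      / (poch D k * poch E k * poch F k)
    = (∑ j ∈ Finset.range (n + 1), (-1) ^ j * (n.choose j : ℝ) * poch A j * poch (D - B) j
       * poch (D - C) j * poch (E - A) (n - j) * poch (F - A) (n - j) / poch D j)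
       / (poch E n * poch F n) := by
  have step : ∀ k ∈ Finset.range (n + 1),
      (-1) ^ k * (n.choose k : ℝ) * poch A k * poch B k * poch C k
      / (poch D k * poch E k * poch F k)
      = ∑ j ∈ Finset.range (k + 1), (-1) ^ k * (n.choose k : ℝ) * poch A k /
        (poch E k * poch F k) * ((k.choose j : ℝ) * poch (D - B) j * poch (D - C) j *
          poch (B + C - D) (k - j) / poch D j) := by
    intro k _
    have := saal (D - B) (D - C) D hD k
    rw [show D - (D - B) - (D - C) = B + C - D by ring, show D - (D - B) = B by ring,
      show D - (D - C) = C by ring] at this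
    rw [← Finset.mul_sum, this]
    have a1 := (poch_pos hE k).ne'
    have a2 := (poch_pos hF k).ne'
    have a3 := (poch_pos hD k).ne'
    field_simp
  rw [Finset.sum_congr rfl step, Finset.sum_div]
  rw [Finset.sum_comm' (t' := Finset.range (n + 1)) (s' := fun j => Finset.Ico j (n + 1))
    (by intro x y; simp only [Finset.mem_range, Finset.mem_Ico]; omega)]
  apply Finset.sum_congr rfl
  intro j hj
  have hjk : j ≤ n := by simpa [Nat.lt_succ_iff] using hj
  obtain ⟨d, rfl⟩ := Nat.exists_eq_add_of_le hjk
  have e2 : j + d - j = d := by omega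
  have e3 : j + d + 1 - j = d + 1 := by omega
  rw [Finset.sum_Ico_eq_sum_range, e2, e3]
  push_cast at h
  have h2 := saal2 (A + j) (B + C - D) (E + j) (F + j) (by positivity) (by positivity) d
    (by linarith)
  rw [show E + j - (A + j) = E - A by ring, show F + j - (A + j) = F - A by ring] at h2
  have a1 := (poch_pos hE j).ne'
  have a2 := (poch_pos hF j).ne'
  have a3 := (poch_pos hD j).ne'
  have a4 := (poch_pos (show 0 < E + j by positivity) d).ne'
  have a5 := (poch_pos (show 0 < F + j by positivity) d).ne'
  have h3 : (-1) ^ j * ((j + d).choose j : ℝ) * poch A j * poch (D - B) j * poch (D - C) j *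
      poch (E - A) d * poch (F - A) d / poch D j / (poch E (j + d) * poch F (j + d))
     = (-1) ^ j * ((j + d).choose j : ℝ) * poch A j * poch (D - B) j * poch (D - C) j / poch D j /
        (poch E j * poch F j) *
       (poch (E - A) d * poch (F - A) d / (poch (E + j) d * poch (F + j) d)) := by
    rw [poch_add E, poch_add F]
    field_simp
  rw [h3, ← h2, Finset.mul_sum]
  apply Finset.sum_congr rfl
  intro i hi
  have hik : i ≤ d := by simpa [Nat.lt_succ_iff] using hi
  have b4 := (poch_pos (show 0 < E + j by positivity) i).ne'
  have b5 := (poch_pos (show 0 < F + j by positivity) i).ne'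
  rw [Nat.add_sub_cancel_left, poch_add A, poch_add E, poch_add F, pow_add]
  have hc : ((j + d).choose (j + i) : ℝ) * ((j + i).choose j : ℝ)
      = ((j + d).choose j : ℝ) * (d.choose i : ℝ) := by
    have := Nat.choose_mul (n := j + d) (k := j + i) (s := j) (by omega)
    rw [Nat.add_sub_cancel_left, Nat.add_sub_cancel_left] at this
    exact_mod_cast this
  field_simp
  linear_combination (poch A j * poch (A + j) i * poch (D - B) j * poch (D - C) j
    * poch (B + C - D) i) * hc

lemma vander (x y : ℝ) (k : ℕ) :
    ∑ j ∈ Finset.range (k + 1), (k.choose j : ℝ) * poch x j * poch y (k - j) = poch (x + y) k := by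
  induction k with
  | zero => simp [poch_zero]
  | succ k ih =>
    rw [poch_succ, ← ih, Finset.sum_mul]
    let G : ℕ → ℝ := fun j => match j with
      | 0 => 0
      | j + 1 => -((k.choose j : ℝ) * poch x (j + 1) * poch y (k - j))
    have hG : ∀ j ∈ Finset.range (k + 1),
        ((k + 1).choose j : ℝ) * poch x j * poch y (k + 1 - j)
        = (k.choose j : ℝ) * poch x j * poch y (k - j) * (x + y + k) + (G (j + 1) - G j) := by
      intro j hj
      have hjk : j ≤ k := by simpa [Nat.lt_succ_iff] using hj
      obtain ⟨d, rfl⟩ := Nat.exists_eq_add_of_le hjk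
      have e1 : j + d + 1 - j = d + 1 := by omega
      have e2 : j + d - j = d := by omega
      cases j with
      | zero =>
        simp only [G, Nat.choose_zero_right, poch_zero, zero_add, poch_succ,
          Nat.sub_zero, Nat.cast_zero]
        push_cast
        ring
      | succ i =>
        have e3 : i + 1 + d - i = d + 1 := by omega
        simp only [G, e2, e1, e3]
        rw [Nat.choose_succ_succ (i + 1 + d) i, poch_succ _ d, poch_succ x (i + 1)]
        push_cast
        ring
    rw [Finset.sum_range_succ, Finset.sum_congr rfl hG, Finset.sum_add_distrib,
      Finset.sum_range_sub]
    simp [G, poch_zero]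

/-- coefficients of the square of `0F1`. -/
noncomputable def sqc (α : ℝ) (k : ℕ) : ℝ := poch (2 * α - 1 + k) k / (k.factorial * poch α k ^ 2)

lemma sqc_eq (α : ℝ) (hα : 0 < α) (k : ℕ) :
    ∑ ij ∈ Finset.HasAntidiagonal.antidiagonal k, (1 / (ij.1.factorial * poch α ij.1)) *
      (1 / (ij.2.factorial * poch α ij.2)) = sqc α k := by
  rw [Finset.Nat.sum_antidiagonal_eq_sum_range_succ_mk]
  have h := vander (1 - α - k) (1 - α - k) k
  have h2 : poch (2 * α - 1 + k) k = (-1) ^ k * poch (1 - α - k + (1 - α - k)) k := by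
    rw [poch_refl _ (2 * α - 1 + k)]
    ring
  rw [sqc, h2, ← h, Finset.mul_sum, Finset.sum_div]
  apply Finset.sum_congr rfl
  intro j hj
  have hjk : j ≤ k := by simpa [Nat.lt_succ_iff] using hj
  obtain ⟨d, rfl⟩ := Nat.exists_eq_add_of_le hjk
  simp only [Nat.add_sub_cancel_left]
  have p1 : (-1) ^ j * poch (1 - α - (j + d : ℕ)) j = poch (α + d) j :=
    poch_refl _ _ _ (by push_cast; ring)
  have p2 : (-1) ^ d * poch (1 - α - (j + d : ℕ)) d = poch (α + j) d :=
    poch_refl _ _ _ (by push_cast; ring)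
  have e1 : poch α (j + d) = poch α j * poch (α + j) d := poch_add _ _ _
  have e2 : poch α (j + d) = poch α d * poch (α + d) j := by rw [add_comm]; exact poch_add _ _ _
  have q1 := (poch_pos hα j).ne'
  have q2 := (poch_pos hα d).ne'
  have q3 := (poch_pos (show 0 < α + j by positivity) d).ne'
  have q4 := (poch_pos (show 0 < α + d by positivity) j).ne'
  have hc : ((j + d).choose j : ℝ) * j.factorial * d.factorial = (j + d).factorial := by
    have := Nat.choose_mul_factorial_mul_factorial (Nat.le_add_right j d)
    rw [Nat.add_sub_cancel_left] at this
    exact_mod_cast this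
  have f1 : ((j + d).factorial : ℝ) ≠ 0 := by positivity
  have : (-1) ^ (j + d) * (((j + d).choose j : ℝ) * poch (1 - α - (j + d : ℕ)) j *
      poch (1 - α - (j + d : ℕ)) d) = ((j + d).choose j : ℝ) * poch (α + d) j * poch (α + j) d := by
    rw [← p1, ← p2, pow_add]; ring
  rw [this, pow_two]
  nth_rewrite 1 [e1]
  rw [e2, ← hc]
  have f2 : ((j + d).choose j : ℝ) ≠ 0 := by
    have := Nat.choose_pos (Nat.le_add_right j d)
    positivity
  field_simp

/-- the function `0F1`. -/
noncomputable def phi (α y : ℝ) : ℝ := ∑' k : ℕ, y ^ k / (k.factorial * poch α k)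

lemma poch_ge_min {α : ℝ} (hα : 0 < α) (k : ℕ) : min α 1 ≤ poch α k := by
  induction k with
  | zero => simp [poch_zero]
  | succ k ih =>
    rcases Nat.eq_zero_or_pos k with rfl | hk
    · simp [poch_one]
    · rw [poch_succ]
      have : (1 : ℝ) ≤ k := by exact_mod_cast hk
      nlinarith [poch_pos hα k]

lemma phi_term_bound {α : ℝ} (hα : 0 < α) (y : ℝ) (k : ℕ) :
    ‖y ^ k / (k.factorial * poch α k)‖ ≤ (min α 1)⁻¹ * (|y| ^ k / k.factorial) := by
  have h1 := poch_ge_min hα k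
  have h0 : 0 < min α 1 := lt_min hα one_pos
  have h2 := poch_pos hα k
  rw [norm_div, norm_pow, Real.norm_eq_abs y, Real.norm_eq_abs, abs_of_pos (a := (k.factorial : ℝ) * poch α k)
    (by positivity)]
  have : (poch α k)⁻¹ ≤ (min α 1)⁻¹ := by gcongr
  calc |y| ^ k / (k.factorial * poch α k) = (poch α k)⁻¹ * (|y| ^ k / k.factorial) := by
        field_simp
    _ ≤ _ := by gcongr

lemma phi_summable {α : ℝ} (hα : 0 < α) (y : ℝ) :
    Summable fun k : ℕ => ‖y ^ k / (k.factorial * poch α k)‖ :=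
  Summable.of_nonneg_of_le (fun _ => norm_nonneg _) (phi_term_bound hα y)
    ((Real.summable_pow_div_factorial |y|).mul_left _)

lemma phi_sq {α : ℝ} (hα : 0 < α) (y : ℝ) : phi α y ^ 2 = ∑' k, sqc α k * y ^ k := by
  rw [pow_two, phi, tsum_mul_tsum_eq_tsum_sum_antidiagonal_of_summable_norm
    (phi_summable hα y) (phi_summable hα y)]
  congr 1
  ext k
  rw [← sqc_eq α hα, Finset.sum_mul]
  apply Finset.sum_congr rfl
  rintro ⟨i, j⟩ hij
  rw [← Finset.HasAntidiagonal.mem_antidiagonal.1 hij, pow_add]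
  ring

/-- modified `(2n+μ-1) (μ)_{n+k-1}`. -/
noncomputable def QQ (μ : ℝ) (n k : ℕ) : ℝ :=
  if n + k = 0 then 1 else (2 * n + μ - 1) * poch μ (n + k - 1)

lemma QQ_mul (μ : ℝ) (n k : ℕ) (h : 0 < n + k) :
    QQ μ n k * (μ + n + k - 1) = (2 * n + μ - 1) * poch μ (n + k) := by
  obtain ⟨d, hd⟩ := Nat.exists_eq_add_of_lt h
  rw [QQ, if_neg h.ne', hd]
  simp only [Nat.zero_add, Nat.add_sub_cancel, poch_succ]
  have : (n : ℝ) + k = d + 1 := by exact_mod_cast (by omega : n + k = d + 1)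
  linear_combination (2 * n + μ - 1) * poch μ d * this

lemma orth_partial (μ : ℝ) (hμ : 0 < μ) (k e I : ℕ) (hI : I ≤ e) :
    ∑ i ∈ Finset.range (I + 1), (-1) ^ (k + i) * QQ μ (k + i) k /
      (i.factorial * (e + 1 - i).factorial * poch μ (k + i + (k + 1 + e)))
    = (-1) ^ (k + I) * poch μ (k + I + k) /
      (I.factorial * (e - I).factorial * poch μ (k + I + (k + 1 + e)) * (e + 1)) := by
  induction I with
  | zero =>
    simp only [zero_add, Finset.sum_range_one, add_zero, Nat.factorial_zero, Nat.sub_zero]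
    have h1 := (poch_pos hμ (k + (k + 1 + e))).ne'
    rw [Nat.factorial_succ]
    have : QQ μ k k = poch μ (k + k) := by
      rcases Nat.eq_zero_or_pos k with rfl | hk
      · simp [QQ, poch_zero]
      · obtain ⟨d, hd⟩ := Nat.exists_eq_add_of_lt (show 0 < k + k by omega)
        rw [QQ, if_neg (by omega), hd]
        simp only [Nat.zero_add, Nat.add_sub_cancel, poch_succ]
        have : (k : ℝ) + k = d + 1 := by exact_mod_cast (by omega : k + k = d + 1)
        linear_combination  poch μ d * this
    rw [this]
    push_cast
    field_simp
  | succ I ih =>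
    rw [Finset.sum_range_succ, ih (by omega)]
    obtain ⟨d, rfl⟩ := Nat.exists_eq_add_of_le hI
    have e1 : I + 1 + d + 1 - (I + 1) = d + 1 := by omega
    have e2 : I + 1 + d - I = d + 1 := by omega
    have e3 : I + 1 + d - (I + 1) = d := by omega
    rw [e1, e2, e3]
    have e4 : k + (I + 1) + (k + 1 + (I + 1 + d)) = k + I + (k + 1 + (I + 1 + d)) + 1 := by ring
    have e5 : k + (I + 1) + k = k + I + k + 1 := by ring
    have e6 : QQ μ (k + (I + 1)) k = (2 * (k + (I + 1)) + μ - 1) * poch μ (k + I + k) := by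
      rw [QQ, if_neg (by omega)]
      push_cast
      congr 2
      omega
    rw [e6, e4, e5, poch_succ μ (k + I + k), poch_succ μ (k + I + (k + 1 + (I + 1 + d))),
      Nat.factorial_succ I, Nat.factorial_succ d]
    have h1 := (poch_pos hμ (k + I + (k + 1 + (I + 1 + d)))).ne'
    have h2 : μ + (k + I + (k + 1 + (I + 1 + d)) : ℕ) ≠ 0 := by positivity
    push_cast at h2 ⊢
    have h3 : (I : ℝ) + 1 + d + 1 ≠ 0 := by positivity
    field_simp
    ring

lemma orth_lt (μ : ℝ) (hμ : 0 < μ) (k e : ℕ) :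
    ∑ i ∈ Finset.range (e + 1 + 1), (-1) ^ (k + i) * QQ μ (k + i) k /
      (i.factorial * (e + 1 - i).factorial * poch μ (k + i + (k + 1 + e))) = 0 := by
  rw [Finset.sum_range_succ, orth_partial μ hμ k e e le_rfl]
  have e4 : k + (e + 1) + (k + 1 + e) = k + e + (k + 1 + e) + 1 := by ring
  have e6 : QQ μ (k + (e + 1)) k = (2 * (k + (e + 1)) + μ - 1) * poch μ (k + e + k) := by
    rw [QQ, if_neg (by omega)]
    push_cast
    congr 2
    omega
  rw [e6, e4, poch_succ, Nat.sub_self, Nat.sub_self, Nat.factorial_succ]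
  have h1 := (poch_pos hμ (k + e + (k + 1 + e))).ne'
  have h2 : μ + (k + e + (k + 1 + e) : ℕ) ≠ 0 := by positivity
  push_cast at h2 ⊢
  field_simp
  ring

/-- The (scaled) expansion coefficients. -/
noncomputable def KK (μ : ℝ) (g : ℕ → ℝ) (n : ℕ) : ℝ :=
  ∑ k ∈ Finset.range (n + 1), (-1) ^ k * QQ μ n k * g k / (k.factorial * (n - k).factorial)

lemma expansion (μ : ℝ) (hμ : 0 < μ) (g : ℕ → ℝ) (m : ℕ) :
    ∑ n ∈ Finset.range (m + 1), (-1) ^ n * KK μ g n / (m - n).factorial *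
      poch (μ + n + m) (m - n) = poch μ (2 * m) * g m / m.factorial := by
  have step : ∀ n ∈ Finset.range (m + 1), (-1) ^ n * KK μ g n / (m - n).factorial *
      poch (μ + n + m) (m - n) = ∑ k ∈ Finset.range (n + 1),
        poch μ (2 * m) * ((-1) ^ k * g k / k.factorial) * ((-1) ^ n * QQ μ n k /
          ((n - k).factorial * (m - n).factorial * poch μ (n + m))) := by
    intro n hn
    have hnm : n ≤ m := by simpa [Nat.lt_succ_iff] using hn
    have hp : poch μ (2 * m) = poch μ (n + m) * poch (μ + n + m) (m - n) := by
      rw [show 2 * m = (n + m) + (m - n) by omega, poch_add]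
      push_cast
      rw [add_assoc μ]
    rw [hp, KK, Finset.mul_sum, Finset.sum_div, Finset.sum_mul]
    apply Finset.sum_congr rfl
    intro k _
    have := (poch_pos hμ (n + m)).ne'
    field_simp
  rw [Finset.sum_congr rfl step]
  rw [Finset.sum_comm' (t' := Finset.range (m + 1)) (s' := fun j => Finset.Ico j (m + 1))
    (by intro x y; simp only [Finset.mem_range, Finset.mem_Ico]; omega)]
  rw [Finset.sum_range_succ, Finset.sum_eq_zero]
  · rw [Nat.Ico_succ_singleton, Finset.sum_singleton, Nat.sub_self, zero_add]
    have hs : ((-1 : ℝ) ^ m) * (-1) ^ m = 1 := by rw [← mul_pow]; simp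
    have hQ : QQ μ m m = poch μ (m + m) := by
      rcases Nat.eq_zero_or_pos m with rfl | hk
      · simp [QQ, poch_zero]
      · obtain ⟨d, hd⟩ := Nat.exists_eq_add_of_lt (show 0 < m + m by omega)
        rw [QQ, if_neg (by omega), hd]
        simp only [Nat.zero_add, Nat.add_sub_cancel, poch_succ]
        have : (m : ℝ) + m = d + 1 := by exact_mod_cast (by omega : m + m = d + 1)
        linear_combination  poch μ d * this
    have := (poch_pos hμ (m + m)).ne'
    rw [hQ, Nat.factorial_zero]
    field_simp
    push_cast
    linear_combination (poch μ (2 * m) * g m) * hs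
  · intro k hk
    have hkm : k < m := by simpa using hk
    obtain ⟨e, rfl⟩ := Nat.exists_eq_add_of_lt hkm
    rw [← Finset.mul_sum, Finset.sum_Ico_eq_sum_range]
    have := orth_lt μ hμ k e
    rw [show k + e + 1 + 1 - k = e + 1 + 1 by omega]
    have h2 : ∑ i ∈ Finset.range (e + 1 + 1), (-1) ^ (k + i) * QQ μ (k + i) k /
      (((k + i - k).factorial : ℝ) * (k + e + 1 - (k + i)).factorial * poch μ (k + i + (k + e + 1))) = 0 := by
      rw [← this]
      apply Finset.sum_congr rfl
      intro i _
      rw [show k + i - k = i by omega, show k + e + 1 - (k + i) = e + 1 - i by omega,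
        show k + e + 1 = k + 1 + e by omega]
    rw [h2, mul_zero]

lemma poch_mono {x y : ℝ} (hx : 0 ≤ x) (hxy : x ≤ y) (k : ℕ) : poch x k ≤ poch y k :=
  Finset.prod_le_prod (fun i _ => by positivity) (fun i _ => by linarith)

lemma poch_mono_right {x : ℝ} (hx : 1 ≤ x) {m n : ℕ} (h : m ≤ n) : poch x m ≤ poch x n := by
  induction n, h using Nat.le_induction with
  | base => exact le_rfl
  | succ n _ ih =>
    rw [poch_succ]
    have := poch_pos (show 0 < x by linarith) n
    have h2 : (0 : ℝ) ≤ n := by positivity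
    nlinarith

lemma poch_scale {x L : ℝ} (hx : 0 ≤ x) (hL : 1 ≤ L) (k : ℕ) : poch (L * x) k ≤ L ^ k * poch x k := by
  rw [poch, poch, ← Finset.card_range k, ← Finset.prod_const, Finset.card_range,
    ← Finset.prod_mul_distrib]
  apply Finset.prod_le_prod
  · intro i _; positivity
  · intro i _
    have : (0 : ℝ) ≤ i := by positivity
    nlinarith

lemma poch_double (x : ℝ) (k : ℕ) : poch (2 * x) (2 * k) = 4 ^ k * poch x k * poch (x + 1 / 2) k := by
  induction k with
  | zero => simp [poch_zero]
  | succ k ih =>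
    rw [show 2 * (k + 1) = 2 * k + 1 + 1 by ring, poch_succ, poch_succ, ih, poch_succ, poch_succ]
    push_cast
    ring

lemma sqc_bound {α μ : ℝ} (hμ : 0 < μ) (h : μ ≤ 2 * α - 1) (i : ℕ) :
    0 ≤ sqc α i ∧ sqc α i ≤ 4 ^ i / i.factorial * (min μ 1)⁻¹ := by
  have hα : 0 < α := by linarith
  have e1 : sqc α i = 4 ^ i / i.factorial * (poch (α - 1 / 2) i / poch α i) *
      (poch (2 * α - 1) i)⁻¹ := by
    have h1 := poch_double (α - 1 / 2) i
    rw [show 2 * (α - 1 / 2) = 2 * α - 1 by ring, show α - 1 / 2 + 1 / 2 = α by ring, two_mul i,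
      poch_add] at h1
    have q1 := (poch_pos hα i).ne'
    have q2 := (poch_pos (show 0 < 2 * α - 1 by linarith) i).ne'
    rw [sqc]
    generalize poch (α - 1 / 2) i = P at h1 ⊢
    field_simp
    linear_combination h1
  have q1 := (poch_pos hα i)
  have q2 := (poch_pos (show 0 < 2 * α - 1 by linarith) i)
  have q3 := (poch_pos (show 0 < α - 1 / 2 by linarith) i)
  have q4 : poch (α - 1 / 2) i / poch α i ≤ 1 := by
    rw [div_le_one q1]
    exact poch_mono (by linarith) (by linarith) i
  have q5 : min μ 1 ≤ poch (2 * α - 1) i :=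
    (min_le_min_right 1 h).trans (poch_ge_min (by linarith) i)
  have q6 : 0 < min μ 1 := lt_min hμ one_pos
  constructor
  · rw [e1]; positivity
  · rw [e1]
    have : (poch (2 * α - 1) i)⁻¹ ≤ (min μ 1)⁻¹ := by gcongr
    calc 4 ^ i / i.factorial * (poch (α - 1 / 2) i / poch α i) * (poch (2 * α - 1) i)⁻¹
        ≤ 4 ^ i / i.factorial * 1 * (min μ 1)⁻¹ := by gcongr
      _ = _ := by ring

lemma QQ_bound {μ : ℝ} (hμ : 0 < μ) (n k : ℕ) (hk : k ≤ n) :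
    |QQ μ n k| ≤ (2 * n + μ + 1) * (8 ^ n * poch ((μ + 1) / 2) n ^ 2) := by
  have h1 : poch (μ + 1) (2 * n) ≤ 8 ^ n * poch ((μ + 1) / 2) n ^ 2 := by
    have := poch_double ((μ + 1) / 2) n
    rw [show 2 * ((μ + 1) / 2) = μ + 1 by ring] at this
    rw [this]
    have h2 : poch ((μ + 1) / 2 + 1 / 2) n ≤ 2 ^ n * poch ((μ + 1) / 2) n :=
      (poch_mono (by linarith) (by linarith) n).trans (poch_scale (by linarith) (by norm_num) n)
    have h3 := poch_pos (show 0 < (μ + 1) / 2 by linarith) n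
    calc 4 ^ n * poch ((μ + 1) / 2) n * poch ((μ + 1) / 2 + 1 / 2) n
        ≤ 4 ^ n * poch ((μ + 1) / 2) n * (2 ^ n * poch ((μ + 1) / 2) n) := by gcongr
      _ = _ := by
        rw [show (8 : ℝ) = 4 * 2 by norm_num, mul_pow]; ring
  have hn : (0 : ℝ) ≤ n := by positivity
  refine le_trans ?_ (mul_le_mul_of_nonneg_left h1 (by positivity))
  have h4 : ∀ j ≤ 2 * n, poch μ j ≤ poch (μ + 1) (2 * n) := fun j hj =>
    (poch_mono hμ.le (by linarith) j).trans (poch_mono_right (by linarith) hj)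
  have h5 := h4 0 (by omega)
  rw [poch_zero] at h5
  rw [QQ]
  split_ifs with h
  · rw [abs_one]
    nlinarith
  · rw [abs_mul]
    have h6 := poch_pos hμ (n + k - 1)
    rw [abs_of_pos h6]
    apply mul_le_mul _ (h4 _ (by omega)) h6.le (by positivity)
    rw [abs_le]
    constructor <;> linarith

lemma sum_inv_fact (n : ℕ) : ∑ k ∈ Finset.range (n + 1),
    (1 : ℝ) / (k.factorial * (n - k).factorial) = 2 ^ n / n.factorial := by
  have := Nat.sum_range_choose n
  have h2 : ((2 : ℝ) ^ n) = ∑ k ∈ Finset.range (n + 1), (n.choose k : ℝ) := by exact_mod_cast this.symm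
  rw [h2, Finset.sum_div]
  apply Finset.sum_congr rfl
  intro k hk
  have hkn : k ≤ n := by simpa [Nat.lt_succ_iff] using hk
  rw [← Nat.choose_mul_factorial_mul_factorial hkn]
  have := Nat.choose_pos hkn
  have : (n.choose k : ℝ) ≠ 0 := by positivity
  push_cast
  field_simp

lemma KK_bound {μ L D : ℝ} (hμ : 0 < μ) (hL : 1 ≤ L) (hD : 0 ≤ D) (g : ℕ → ℝ)
    (hg : ∀ k, |g k| ≤ D * L ^ k) (n : ℕ) :
    |KK μ g n / (4 ^ n * poch ((μ + 1) / 2) n ^ 2)| ≤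
      ((μ + 3) * D) * ((8 * L) ^ n / n.factorial) := by
  have h3 := poch_pos (show 0 < (μ + 1) / 2 by linarith) n
  rw [abs_div, abs_of_pos (a := 4 ^ n * poch ((μ + 1) / 2) n ^ 2) (by positivity),
    div_le_iff₀ (by positivity)]
  have h1 : |KK μ g n| ≤ ∑ k ∈ Finset.range (n + 1),
      ((2 * n + μ + 1) * (8 ^ n * poch ((μ + 1) / 2) n ^ 2)) * (D * L ^ n) *
       ((1 : ℝ) / (k.factorial * (n - k).factorial)) := by
    refine (Finset.abs_sum_le_sum_abs _ _).trans (Finset.sum_le_sum ?_)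
    intro k hk
    have hkn : k ≤ n := by simpa [Nat.lt_succ_iff] using hk
    rw [abs_div, abs_mul, abs_mul, abs_pow, abs_neg, abs_one, one_pow, one_mul,
      abs_of_pos (a := (k.factorial : ℝ) * (n - k).factorial) (by positivity), div_eq_mul_one_div]
    have : |g k| ≤ D * L ^ n := (hg k).trans (by gcongr)
    gcongr
    exact QQ_bound hμ n k hkn
  refine h1.trans ?_
  rw [← Finset.mul_sum, sum_inv_fact]
  have h4 : 2 * (n : ℝ) + μ + 1 ≤ (μ + 3) * 2 ^ n := by
    have a1 : (n : ℝ) ≤ 2 ^ n := by exact_mod_cast Nat.lt_two_pow_self.le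
    have a2 : (1 : ℝ) ≤ 2 ^ n := one_le_pow₀ (by norm_num)
    nlinarith
  have e : (μ + 3) * D * ((8 * L) ^ n / n.factorial) * (4 ^ n * poch ((μ + 1) / 2) n ^ 2)
    = (((μ + 3) * 2 ^ n) * (8 ^ n * poch ((μ + 1) / 2) n ^ 2)) * (D * L ^ n) * (2 ^ n / n.factorial) := by
    rw [mul_pow, show (4 : ℝ) = 2 * 2 by norm_num, mul_pow]; ring
  rw [e]
  gcongr

lemma phi_ne_zero {α y : ℝ} (h1 : 1 ≤ α) (h : |y| * Real.exp |y| < α) : phi α y ≠ 0 := by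
  have hα : 0 < α := by linarith
  have hs : Summable fun k : ℕ => y ^ k / (k.factorial * poch α k) := (phi_summable hα y).of_norm
  have e : phi α y = 1 + ∑' k : ℕ, y ^ (k + 1) / ((k + 1).factorial * poch α (k + 1)) := by
    rw [phi, hs.tsum_eq_zero_add]
    simp [poch_zero]
  have hexp : HasSum (fun k : ℕ => |y| / α * (|y| ^ k / k.factorial)) (|y| / α * Real.exp |y|) := by
    apply HasSum.mul_left
    rw [Real.exp_eq_exp_ℝ]
    exact NormedSpace.expSeries_div_hasSum_exp |y|
  have hb := tsum_of_norm_bounded hexp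
    (f := fun k : ℕ => y ^ (k + 1) / ((k + 1).factorial * poch α (k + 1))) (by
      intro k
      rw [norm_div, norm_pow, Real.norm_eq_abs y, Real.norm_eq_abs,
        abs_of_pos (mul_pos (by positivity) (poch_pos hα _))]
      have a1 : α ≤ poch α (k + 1) := by
        rw [poch_succ_left]
        have := poch_ge_min (show 0 < α + 1 by linarith) k
        rw [min_eq_right (by linarith)] at this
        nlinarith
      have a2 : (k.factorial : ℝ) ≤ (k + 1).factorial := by
        exact_mod_cast Nat.factorial_le (Nat.le_succ k)
      calc |y| ^ (k + 1) / ((k + 1).factorial * poch α (k + 1)) ≤ |y| ^ (k + 1) / (k.factorial * α) := by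
            gcongr
        _ = _ := by rw [pow_succ]; field_simp)
  intro h0
  rw [e] at h0
  have : (∑' k : ℕ, y ^ (k + 1) / ((k + 1).factorial * poch α (k + 1))) = -1 := by linarith
  rw [this, norm_neg, norm_one, div_mul_eq_mul_div, le_div_iff₀ hα] at hb
  linarith

/-- the weights `g_k`. -/
noncomputable def gg (μ a b c : ℝ) (k : ℕ) : ℝ :=
  poch ((μ + 1) / 2) k * poch a k / (poch (μ / 2) k * poch b k * poch c k)

lemma coeff_id {μ a b c : ℝ} (hμ : 0 < μ) (hb : 0 < b) (hc : 0 < c) (y : ℝ) (m : ℕ) :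
    ∑ ij ∈ Finset.HasAntidiagonal.antidiagonal m,
      KK μ (gg μ a b c) ij.1 / (4 ^ ij.1 * poch ((μ + 1) / 2) ij.1 ^ 2) * y ^ ij.1 *
      (sqc ((μ + 1) / 2 + ij.1) ij.2 * (-y / 4) ^ ij.2)
    = poch a m / ((m.factorial : ℝ) * poch b m * poch c m) * (-y) ^ m := by
  have hν : 0 < (μ + 1) / 2 := by linarith
  have h1 := expansion μ hμ (gg μ a b c) m
  have hd := poch_double (μ / 2) m
  rw [show 2 * (μ / 2) = μ by ring, show μ / 2 + 1 / 2 = (μ + 1) / 2 by ring] at hd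
  have q1 := (poch_pos hν m).ne'
  have q2 := (poch_pos (show 0 < μ / 2 by linarith) m).ne'
  have q3 := (poch_pos hb m).ne'
  have q4 := (poch_pos hc m).ne'
  have h2 : poch a m / ((m.factorial : ℝ) * poch b m * poch c m) * (-y) ^ m
     = (-y) ^ m / (4 ^ m * poch ((μ + 1) / 2) m ^ 2) *
       (poch μ (2 * m) * gg μ a b c m / m.factorial) := by
    rw [hd, gg]
    generalize poch ((μ + 1) / 2) m = P at q1 ⊢
    generalize poch (μ / 2) m = P at q2 ⊢
    field_simp
  rw [h2, ← h1, Finset.Nat.sum_antidiagonal_eq_sum_range_succ_mk, Finset.mul_sum]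
  apply Finset.sum_congr rfl
  intro n hn
  have hjk : n ≤ m := by simpa [Nat.lt_succ_iff] using hn
  obtain ⟨d, rfl⟩ := Nat.exists_eq_add_of_le hjk
  simp only [Nat.add_sub_cancel_left]
  rw [sqc, poch_add _ n d]
  have e : 2 * ((μ + 1) / 2 + n) - 1 + d = μ + n + (n + d : ℕ) := by push_cast; ring
  rw [e]
  have r1 := (poch_pos hν n).ne'
  have r2 := (poch_pos (show 0 < (μ + 1) / 2 + n by positivity) d).ne'
  generalize poch ((μ + 1) / 2) n = P at r1 ⊢
  generalize poch ((μ + 1) / 2 + n) d = P2 at r2 ⊢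
  generalize poch (μ + n + (n + d : ℕ)) d = P3
  have e2 : (-y / 4) ^ d = (-y) ^ d / 4 ^ d := div_pow _ _ _
  have e3 : (-y) ^ (n + d) * (-1) ^ n = y ^ n * (-y) ^ d := by
    rw [pow_add, mul_right_comm, ← mul_pow]; simp
  rw [e2]
  have e4 : (-y) ^ (n + d) / (4 ^ (n + d) * (P * P2) ^ 2) *
      ((-1) ^ n * KK μ (gg μ a b c) n / d.factorial * P3) =
      ((-y) ^ (n + d) * (-1) ^ n) / (4 ^ (n + d) * (P * P2) ^ 2) *
      (KK μ (gg μ a b c) n / d.factorial * P3) := by ring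
  rw [e4, e3, pow_add]
  field_simp

lemma gg_bound {μ a b c : ℝ} (hμ : 0 < μ) (ha : 0 < a) (hab : a < b) (hc : 0 < c) (k : ℕ) :
    |gg μ a b c k| ≤ (min c 1)⁻¹ * ((μ + 1) / μ) ^ k := by
  have hL : 1 ≤ (μ + 1) / μ := by rw [one_le_div hμ]; linarith
  have h1 := poch_scale (show 0 ≤ μ / 2 by linarith) hL k
  rw [show (μ + 1) / μ * (μ / 2) = (μ + 1) / 2 by field_simp] at h1
  have h2 := poch_mono ha.le hab.le k
  have h3 := poch_ge_min hc k
  have h4 : 0 < min c 1 := lt_min hc one_pos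
  have p1 := poch_pos (show 0 < (μ + 1) / 2 by linarith) k
  have p2 := poch_pos (show 0 < μ / 2 by linarith) k
  have p3 := poch_pos ha k
  have p4 := poch_pos (ha.trans hab) k
  have p5 := poch_pos hc k
  rw [gg, abs_of_pos (by positivity), div_le_iff₀ (by positivity)]
  have h5 : 1 ≤ (min c 1)⁻¹ * poch c k := by
    rw [inv_mul_eq_div, le_div_iff₀ h4]
    linarith
  calc poch ((μ + 1) / 2) k * poch a k ≤ (((μ + 1) / μ) ^ k * poch (μ / 2) k) * poch b k := by gcongr
    _ ≤ (((μ + 1) / μ) ^ k * poch (μ / 2) k) * poch b k * ((min c 1)⁻¹ * poch c k) := by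
      apply le_mul_of_one_le_right _ h5
      positivity
    _ = _ := by ring

theorem gasper_pos {μ a b c : ℝ} (hμ : 0 < μ) (ha : 0 < a) (hab : a < b) (hc : 0 < c)
    (h0 : ∀ n, 0 ≤ KK μ (gg μ a b c) n) (h1 : ∀ n, 2 ≤ n → 0 < KK μ (gg μ a b c) n)
    (y : ℝ) (hy : 0 < y) : 0 < oneF2 a b c (-y) := by
  have hν : 0 < (μ + 1) / 2 := by linarith
  set cn : ℕ → ℝ := fun n => KK μ (gg μ a b c) n / (4 ^ n * poch ((μ + 1) / 2) n ^ 2) with hcn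
  set f : ℕ × ℕ → ℝ := fun ij => cn ij.1 * y ^ ij.1 *
      (sqc ((μ + 1) / 2 + ij.1) ij.2 * (-y / 4) ^ ij.2) with hf
  have hL : 1 ≤ (μ + 1) / μ := by rw [one_le_div hμ]; linarith
  have h4 : 0 < min c 1 := lt_min hc one_pos
  have hm : 0 < min μ 1 := lt_min hμ one_pos
  have hfs : Summable f := by
    have s1 : Summable fun n : ℕ => ((μ + 3) * (min c 1)⁻¹) *
        ((8 * ((μ + 1) / μ) * y) ^ n / n.factorial) :=
      (Real.summable_pow_div_factorial _).mul_left _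
    have s2 : Summable fun n : ℕ => (min μ 1)⁻¹ * (y ^ n / n.factorial) :=
      (Real.summable_pow_div_factorial _).mul_left _
    have s3 := s1.mul_of_nonneg s2 (fun n => by positivity) (fun n => by positivity)
    refine Summable.of_norm_bounded s3 ?_
    rintro ⟨n, i⟩
    have b1 := KK_bound hμ hL (inv_nonneg.2 h4.le) _ (gg_bound hμ ha hab hc) n
    have b2 := sqc_bound (α := (μ + 1) / 2 + n) hμ (by
      have : (0 : ℝ) ≤ n := by positivity
      linarith) i
    simp only [hf, norm_mul, Real.norm_eq_abs, abs_pow, abs_of_pos hy, abs_of_nonneg b2.1]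
    have e1 : |(-y / 4)| = y / 4 := by rw [abs_div, abs_neg, abs_of_pos hy]; norm_num
    rw [e1]
    calc |cn n| * y ^ n * (sqc ((μ + 1) / 2 + n) i * (y / 4) ^ i)
        ≤ ((μ + 3) * (min c 1)⁻¹ * ((8 * ((μ + 1) / μ)) ^ n / n.factorial)) * y ^ n *
          ((4 ^ i / i.factorial * (min μ 1)⁻¹) * (y / 4) ^ i) := by
          have := b2.1
          have := b2.2
          gcongr
      _ = _ := by
          rw [div_pow, mul_pow _ y]
          field_simp
  have e1 : oneF2 a b c (-y) = ∑' p, f p := by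
    have hs : Summable fun x : (Σ n : ℕ, Finset.HasAntidiagonal.antidiagonal n) =>
      f (x.2 : ℕ × ℕ) := Finset.HasAntidiagonal.sigmaAntidiagonalEquivProd.summable_iff.2 hfs
    rw [← Finset.HasAntidiagonal.sigmaAntidiagonalEquivProd.tsum_eq f]
    have : ∀ m : ℕ, poch a m / ((m.factorial : ℝ) * poch b m * poch c m) * (-y) ^ m
      = ∑' x : Finset.HasAntidiagonal.antidiagonal m, f (x : ℕ × ℕ) := by
      intro m
      rw [← coeff_id hμ (ha.trans hab) hc y m, tsum_fintype, Finset.sum_coe_sort _ f]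
    rw [oneF2, tsum_congr this]
    exact (Summable.tsum_sigma hs).symm
  have hphi : ∀ n : ℕ, ∑' i, f (n, i) = cn n * y ^ n * phi ((μ + 1) / 2 + n) (-y / 4) ^ 2 := by
    intro n
    rw [phi_sq (by positivity)]
    simp only [hf]
    rw [tsum_mul_left]
  rw [e1, hfs.tsum_prod]
  have hcn0 : ∀ n, 0 ≤ cn n := by
    intro n
    have := poch_pos hν n
    have := h0 n
    simp only [hcn]; positivity
  obtain ⟨N, hN⟩ := exists_nat_gt (|(-y / 4)| * Real.exp |(-y / 4)|)
  refine Summable.tsum_pos hfs.prod (fun n => ?_) (N + 2) ?_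
  · simp only [hphi]
    have := hcn0 n
    positivity
  · simp only [hphi]
    have a1 : 0 < cn (N + 2) := by
      have := poch_pos hν (N + 2)
      have := h1 (N + 2) (by omega)
      simp only [hcn]; positivity
    have a2 : phi ((μ + 1) / 2 + (N + 2 : ℕ)) (-y / 4) ≠ 0 := by
      have : (0 : ℝ) ≤ N := by positivity
      apply phi_ne_zero
      · push_cast; linarith
      · push_cast; linarith
    positivity

lemma KK_pref {μ a b c : ℝ} (hμ : 0 < μ) (n : ℕ) (hn : 1 ≤ n) :
    ∃ P : ℝ, 0 < P ∧ KK μ (gg μ a b c) n = P * ∑ k ∈ Finset.range (n + 1),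
      (-1) ^ k * (n.choose k : ℝ) * poch a k * poch ((μ + 1) / 2) k * poch (n - 1 + μ) k
        / (poch c k * poch (μ / 2) k * poch b k) := by
  obtain ⟨m, rfl⟩ : ∃ m, n = m + 1 := ⟨n - 1, by omega⟩
  refine ⟨(2 * (m + 1 : ℕ) + μ - 1) * poch μ m / (m + 1).factorial, ?_, ?_⟩
  · have := poch_pos hμ m
    have h2 : (0:ℝ) < 2 * (m + 1 : ℕ) + μ - 1 := by
      push_cast
      have : (0:ℝ) ≤ m := by positivity
      linarith
    positivity
  · rw [KK, Finset.mul_sum]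
    apply Finset.sum_congr rfl
    intro k hk
    have hk' : k ≤ m + 1 := by
      have := Finset.mem_range.mp hk
      omega
    rw [QQ, if_neg (by omega), gg, Nat.cast_choose ℝ hk']
    have e : m + 1 + k - 1 = m + k := by omega
    rw [e, poch_add μ m k]
    have e2 : ((m + 1 : ℕ) : ℝ) - 1 + μ = μ + m := by push_cast; ring
    rw [e2]
    have f1 : ((m + 1).factorial : ℝ) ≠ 0 := by positivity
    have f2 : (k.factorial : ℝ) ≠ 0 := by positivity
    have f3 : ((m + 1 - k).factorial : ℝ) ≠ 0 := by positivity
    generalize poch (μ / 2) k = x1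
    generalize poch b k = x2
    generalize poch c k = x3
    field_simp

/-- the terms of the second transformed sum. -/
noncomputable def TT (a u p w c : ℝ) (n k : ℕ) : ℝ :=
  (n.choose k : ℝ) * poch a k * poch u k * poch (p - 1 / 2 + (n - k : ℕ)) k
    * poch w (n - k) * poch p (n - k) / poch c k

lemma KK_two {μ a b c p w u : ℝ} (hμ : 0 < μ) (hb : 0 < b) (hc : 0 < c)
    (h1 : μ = b + c - a - 1 / 2) (h2 : p = b - a) (h3 : w = μ / 2 - a) (h4 : u = c - (μ + 1) / 2)
    (n : ℕ) (hn : 1 ≤ n) :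
    ∃ P : ℝ, 0 < P ∧ KK μ (gg μ a b c) n = P * ∑ k ∈ Finset.range (n + 1), TT a u p w c n k := by
  obtain ⟨P, hP, h⟩ := KK_pref (a := a) (b := b) (c := c) hμ n hn
  have x1 := poch_pos (show 0 < μ / 2 by positivity) n
  have x2 := poch_pos hb n
  refine ⟨P / (poch (μ / 2) n * poch b n), by positivity, ?_⟩
  rw [h, whipple a _ _ c (μ / 2) b hc (by positivity) hb n (by rw [h1]; ring), div_mul_eq_mul_div,
    mul_div_assoc]
  congr 2
  apply Finset.sum_congr rfl
  intro k hk
  have hk' : k ≤ n := by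
    have := Finset.mem_range.mp hk
    omega
  have r := poch_refl (c - (n - 1 + μ)) (p - 1 / 2 + (n - k : ℕ)) k (by
    rw [Nat.cast_sub hk', h2, h1]; ring)
  rw [TT, ← r, h2, h3, h4]
  ring

lemma KK_one {μ a b c w u v : ℝ} (hμ : 0 < μ) (hb : 0 < b) (hc : 0 < c)
    (h1 : μ = b + c - a - 1 / 2) (h3 : w = μ / 2 - a) (h4 : u = c - (μ + 1) / 2)
    (h5 : v = b - (μ + 1) / 2)
    (n : ℕ) (hn : 1 ≤ n) :
    ∃ P : ℝ, 0 < P ∧ KK μ (gg μ a b c) n = P * ∑ k ∈ Finset.range (n + 1), (n.choose k : ℝ) *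
      poch ((μ + 1) / 2) k * poch w k * poch (μ / 2 + (n - k : ℕ)) k * (poch v (n - k) *
        poch u (n - k)) / poch (μ / 2) k := by
  obtain ⟨P, hP, h⟩ := KK_pref (a := a) (b := b) (c := c) hμ n hn
  have x1 := poch_pos hc n
  have x2 := poch_pos hb n
  refine ⟨P / (poch b n * poch c n), by positivity, ?_⟩
  have hw := whipple ((μ + 1) / 2) a (n - 1 + μ) (μ / 2) b c (by positivity) hb hc n
    (by rw [h1]; ring)
  have e : ∑ k ∈ Finset.range (n + 1),
      (-1) ^ k * (n.choose k : ℝ) * poch a k * poch ((μ + 1) / 2) k * poch (n - 1 + μ) k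
        / (poch c k * poch (μ / 2) k * poch b k) = ∑ k ∈ Finset.range (n + 1),
      (-1) ^ k * (n.choose k : ℝ) * poch ((μ + 1) / 2) k * poch a k * poch (n - 1 + μ) k
        / (poch (μ / 2) k * poch b k * poch c k) := by
    apply Finset.sum_congr rfl
    intro k _
    congr 1 <;> ring
  rw [h, e, hw, div_mul_eq_mul_div, mul_div_assoc]
  congr 2
  apply Finset.sum_congr rfl
  intro k hk
  have hk' : k ≤ n := by
    have := Finset.mem_range.mp hk
    omega
  have r := poch_refl (μ / 2 - (n - 1 + μ)) (μ / 2 + (n - k : ℕ)) k (by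
    rw [Nat.cast_sub hk']; ring)
  rw [← r, h3, h4, h5]
  ring

lemma poch_neg {x : ℝ} (h1 : -1 < x) (h2 : x < 0) (k : ℕ) (hk : 1 ≤ k) : poch x k < 0 := by
  obtain ⟨m, rfl⟩ : ∃ m, k = m + 1 := ⟨k - 1, by omega⟩
  rw [poch_succ_left]
  exact mul_neg_of_neg_of_pos h2 (poch_pos (by linarith) m)

/-- case one: `u` and `v` of the same strict sign. -/
lemma case_one {μ a b c w u v : ℝ} (hμ : 0 < μ) (hb : 0 < b) (hc : 0 < c)
    (h1 : μ = b + c - a - 1 / 2) (h3 : w = μ / 2 - a) (h4 : u = c - (μ + 1) / 2)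
    (h5 : v = b - (μ + 1) / 2) (hw : 0 ≤ w)
    (huv : (0 < u ∧ 0 < v) ∨ (-1 < u ∧ u < 0 ∧ -1 < v ∧ v < 0))
    (n : ℕ) (hn : 1 ≤ n) : 0 < KK μ (gg μ a b c) n := by
  obtain ⟨P, hP, h⟩ := KK_one hμ hb hc h1 h3 h4 h5 n hn
  rw [h]
  apply mul_pos hP
  have hpos : ∀ k, 1 ≤ k → 0 < poch v k * poch u k := by
    intro k hk
    rcases huv with ⟨h6, h7⟩ | ⟨h6, h7, h8, h9⟩
    · exact mul_pos (poch_pos h7 k) (poch_pos h6 k)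
    · exact mul_pos_of_neg_of_neg (poch_neg h8 h9 k hk) (poch_neg h6 h7 k hk)
  have hnn : ∀ k, 0 ≤ poch v k * poch u k := by
    intro k
    rcases Nat.eq_zero_or_pos k with rfl | h
    · simp [poch_zero]
    · exact (hpos k h).le
  apply Finset.sum_pos'
  · intro k _
    have y1 := poch_pos (show 0 < (μ + 1) / 2 by positivity) k
    have y2 := poch_nonneg hw k
    have y3 := poch_pos (show 0 < μ / 2 + (n - k : ℕ) by positivity) k
    have y4 := poch_pos (show 0 < μ / 2 by positivity) k
    have y5 := hnn (n - k)
    positivity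
  · refine ⟨0, by simp, ?_⟩
    simp only [poch_zero, Nat.choose_zero_right, Nat.sub_zero]
    have := hpos n hn
    simpa using this

lemma TT_nonneg {a u p w c : ℝ} (ha : 0 < a) (hu : 0 ≤ u) (hp : 0 < p) (hw : 0 ≤ w) (hc : 0 < c)
    (n k : ℕ) (h : 0 ≤ p - 1 / 2 + (n - k : ℕ)) : 0 ≤ TT a u p w c n k := by
  have y1 := poch_pos ha k
  have y2 := poch_nonneg hu k
  have y3 := poch_nonneg h k
  have y4 := poch_nonneg hw (n - k)
  have y5 := poch_pos hp (n - k)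
  have y6 := poch_pos hc k
  unfold TT
  positivity

lemma TT_zero {a u p w c : ℝ} (hp : 0 < p) (hw : 0 < w) (n : ℕ) : 0 < TT a u p w c n 0 := by
  have y4 := poch_pos hw n
  have y5 := poch_pos hp n
  unfold TT
  simp only [poch_zero, Nat.choose_zero_right, Nat.sub_zero]
  simp
  positivity

/-- case two with `p ≥ 1/2`. -/
lemma case_two_large {a u p w c : ℝ} (ha : 0 < a) (hu : 0 ≤ u) (hp : 1 / 2 ≤ p) (hw : 0 ≤ w)
    (hc : 0 < c) (hcor : 0 < w ∨ (0 < u ∧ 1 / 2 < p)) (n : ℕ) :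
    0 < ∑ k ∈ Finset.range (n + 1), TT a u p w c n k := by
  apply Finset.sum_pos'
  · intro k _
    apply TT_nonneg ha hu (by linarith) hw hc
    have : (0:ℝ) ≤ (n - k : ℕ) := by positivity
    linarith
  · rcases hcor with h | ⟨h, h'⟩
    · exact ⟨0, by simp, TT_zero (by linarith) h n⟩
    · refine ⟨n, by simp, ?_⟩
      have y1 := poch_pos ha n
      have y2 := poch_pos h n
      have y3 := poch_pos (show 0 < p - 1 / 2 by linarith) n
      have y6 := poch_pos hc n
      unfold TT
      simp only [Nat.choose_self, Nat.sub_self, poch_zero, Nat.cast_zero, add_zero]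
      simp
      simp at y3
      positivity

/-- case B forces `a < 2`. -/
lemma caseB_a {a u p w c : ℝ} (hp2 : p < 1 / 2) (hw : 0 < w)
    (hu : u = w + a - p) (hc : c = u + w + a + 1 / 2)
    (hB : a * u * (2 + c) < c * (a + u + 1)) : a < 2 := by
  by_contra hcon
  push Not at hcon
  obtain ⟨x, rfl⟩ : ∃ x, a = x + 2 := ⟨a - 2, by ring⟩
  obtain ⟨y, rfl⟩ : ∃ y, p = 1 / 2 - y := ⟨1 / 2 - p, by ring⟩
  have hx : 0 ≤ x := by linarith
  have hy : 0 ≤ y := by linarith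
  have : 0 ≤ (x + 2) * u * (2 + c) - c * (x + 2 + u + 1) := by
    rw [hc, hu]
    ring_nf
    positivity
  linarith

lemma caseB_step {a u p w c : ℝ} (ha : 0 < a) (hp : 0 < p) (hp2 : p < 1 / 2) (hw : 0 < w)
    (hu0 : 0 < u) (hu : u = w + a - p) (hc : c = u + w + a + 1 / 2)
    (hB : a * u * (2 + c) < c * (a + u + 1)) (n : ℝ) (hn : 1 ≤ n) :
    (a + n) * (u + n) * (p - 1 / 2 + n) ≤ (c + n) * (w + n) * (p + n) := by
  have ha2 := caseB_a hp2 hw hu hc hB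
  have hc0 : 0 < c := by rw [hc]; positivity
  have key : (a + u + 1) * (2 * p + 1) ≤ (c + 2) * ((w + 1) * (p + 1)) := by
    rcases le_or_gt (p - w - w * p) 0 with hD | hD
    · have : 2 * p + 1 ≤ (w + 1) * (p + 1) := by
        linarith
      have h2 : a + u + 1 ≤ c + 2 := by rw [hc]; linarith
      gcongr
    · have h3 : 0 ≤ (2 * w - p + 5 / 2) * ((w + 1) * (p + 1)) - (1 + w - p) * (2 * p + 1)
          - 4 * (p - w - w * p) := by
        obtain ⟨y, rfl⟩ : ∃ y, p = 1 / 2 - y := ⟨1 / 2 - p, by ring⟩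
        have hy : 0 < y := by linarith
        have hy2 : y < 1 / 2 := by linarith
        nlinarith [mul_pos hw hy, mul_pos hw hw, mul_pos hw (sub_pos.mpr hy2), mul_pos (mul_pos hw hw) (sub_pos.mpr hy2), mul_pos (mul_pos hw hy) (sub_pos.mpr hy2), mul_pos hy hy]
      have h4 : a * (p - w - w * p) ≤ 2 * (p - w - w * p) := by gcongr
      rw [hc, hu]
      nlinarith
  have h1 : (a + 1) * (u + 1) * (p + 1 / 2) ≤ (c + 1) * (w + 1) * (p + 1) := by
    have h5 : (a + 1) * (u + 1) * (c + 2) ≤ (a + u + 1) * (2 * (c + 1)) := by nlinarith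
    have h6 : (c + 2) * ((a + 1) * (u + 1) * (p + 1 / 2)) ≤ (c + 2) * ((c + 1) * (w + 1) * (p + 1)) := by
      calc (c + 2) * ((a + 1) * (u + 1) * (p + 1 / 2)) = (a + 1) * (u + 1) * (c + 2) * (p + 1 / 2) := by ring
        _ ≤ (a + u + 1) * (2 * (c + 1)) * (p + 1 / 2) := by gcongr
        _ = ((a + u + 1) * (2 * p + 1)) * (c + 1) := by ring
        _ ≤ ((c + 2) * ((w + 1) * (p + 1))) * (c + 1) := by gcongr
        _ = _ := by ring
    exact le_of_mul_le_mul_left h6 (by linarith)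
  have h2 : 0 ≤ 2 * (2 * w + 1) + (c * (w + p) + w * p - a * u + (a + u) * (1 / 2 - p)) := by
    rw [hc, hu]
    have ha2' : 0 < 2 - a := by linarith
    have hp' : 0 < 1 / 2 - p := by linarith
    nlinarith [mul_pos ha ha2', mul_pos ha hw, mul_pos ha hp, mul_pos hw hp, mul_pos hw hp', mul_pos hp hp', mul_pos hw hw]
  obtain ⟨t, rfl⟩ : ∃ t, n = t + 1 := ⟨n - 1, by ring⟩
  have ht : 0 ≤ t := by linarith
  have e : (c + (t + 1)) * (w + (t + 1)) * (p + (t + 1)) - (a + (t + 1)) * (u + (t + 1)) * (p - 1 / 2 + (t + 1))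
     = ((c + 1) * (w + 1) * (p + 1) - (a + 1) * (u + 1) * (p + 1 / 2))
      + t * (2 * (2 * w + 1) + (c * (w + p) + w * p - a * u + (a + u) * (1 / 2 - p)))
      + t ^ 2 * (2 * w + 1) := by
    rw [hc]
    ring
  have : 0 ≤ t * (2 * (2 * w + 1) + (c * (w + p) + w * p - a * u + (a + u) * (1 / 2 - p))) := mul_nonneg ht h2
  have : 0 ≤ t ^ 2 * (2 * w + 1) := by positivity
  linarith

/-- a common positive factor. -/
noncomputable def XX (a u p c : ℝ) (m : ℕ) : ℝ := poch a m * poch u m * poch p m / poch c m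

lemma XX_pos {a u p c : ℝ} (ha : 0 < a) (hu : 0 < u) (hp : 0 < p) (hc : 0 < c) (m : ℕ) :
    0 < XX a u p c m := by
  have := poch_pos ha m
  have := poch_pos hu m
  have := poch_pos hp m
  have := poch_pos hc m
  unfold XX
  positivity

lemma TT_last {a u p w c : ℝ} (hc : 0 < c) (m : ℕ) :
    TT a u p w c (m + 1) (m + 1) = - (XX a u (p + 1 / 2) c m * ((a + m) * (u + m) * (1 / 2 - p) / (c + m))) := by
  have y := (poch_pos hc m).ne'
  have y2 : c + m ≠ 0 := by positivity
  have e : p - 1 / 2 + 1 = p + 1 / 2 := by ring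
  unfold TT XX
  simp only [Nat.choose_self, Nat.sub_self, poch_zero, Nat.cast_zero, add_zero, Nat.cast_one]
  rw [poch_succ a, poch_succ u, poch_succ c, poch_succ_left (p - 1 / 2), e]
  field_simp
  ring

lemma TT_prev {a u p w c : ℝ} (m : ℕ) :
    TT a u p w c (m + 1) m = XX a u (p + 1 / 2) c m * ((m + 1) * w * p) := by
  have e : p - 1 / 2 + 1 = p + 1 / 2 := by ring
  unfold TT XX
  simp only [Nat.choose_succ_self_right, Nat.add_sub_cancel_left, poch_one, Nat.cast_one]
  rw [e]
  push_cast
  ring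

lemma TT_prev2 {a u p w c : ℝ} (m : ℕ) :
    TT a u p w c (m + 2) m = XX a u (p + 3 / 2) c m * ((m + 2) * (m + 1) / 2 * w * (w + 1) * p * (p + 1)) := by
  have e : p - 1 / 2 + 2 = p + 3 / 2 := by ring
  have e2 : ((m + 2).choose m : ℝ) = (m + 2) * (m + 1) / 2 := by
    rw [Nat.choose_symm_add, Nat.cast_choose_two]
    push_cast
    ring
  have e3 : ∀ x : ℝ, poch x 2 = x * (x + 1) := fun x => by
    rw [poch_succ x 1, poch_one]
    simp
  unfold TT XX
  simp only [Nat.add_sub_cancel_left, e3, e2, Nat.cast_ofNat]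
  rw [e]
  ring

lemma XX_succ {a u p c : ℝ} (hc : 0 < c) (m : ℕ) :
    XX a u (p + 1 / 2) c (m + 1) = XX a u (p + 3 / 2) c m * ((a + m) * (u + m) * (p + 1 / 2) / (c + m)) := by
  have y := (poch_pos hc m).ne'
  have y2 : c + m ≠ 0 := by positivity
  have e : p + 1 / 2 + 1 = p + 3 / 2 := by ring
  unfold XX
  rw [poch_succ a, poch_succ u, poch_succ c, poch_succ_left (p + 1 / 2), e]
  field_simp

lemma two_term {a u p w c : ℝ} (ha : 0 < a) (hu : 0 < u) (hp : 0 < p) (hc : 0 < c) (m : ℕ)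
    (h : (a + m) * (u + m) * (1 / 2 - p) ≤ (m + 1) * w * p * (c + m)) :
    0 ≤ TT a u p w c (m + 1) m + TT a u p w c (m + 1) (m + 1) := by
  rw [TT_last hc, TT_prev, ← sub_eq_add_neg, ← mul_sub]
  have := XX_pos ha hu (show 0 < p + 1 / 2 by positivity) hc m
  apply mul_nonneg this.le
  rw [sub_nonneg, div_le_iff₀ (by positivity)]
  linarith

lemma three_term {a u p w c : ℝ} (ha : 0 < a) (hu : 0 < u) (hp : 0 < p) (hp2 : p < 1 / 2) (hw : 0 < w)
    (hc : c = u + w + a + 1 / 2) (hyp : a * u * (1 / 2 - p) ≤ c * w * p) (hA : a * u < c)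
    (hA2 : c * (a + u + 1) ≤ a * u * (2 + c)) (m : ℕ) :
    0 ≤ TT a u p w c (m + 2) m + TT a u p w c (m + 2) (m + 1) + TT a u p w c (m + 2) (m + 2) := by
  have hc0 : 0 < c := by rw [hc]; positivity
  have e1 := TT_last (a := a) (u := u) (p := p) (w := w) hc0 (m + 1)
  have e2 := TT_prev (a := a) (u := u) (p := p) (w := w) (c := c) (m + 1)
  have e3 := TT_prev2 (a := a) (u := u) (p := p) (w := w) (c := c) m
  rw [show m + 1 + 1 = m + 2 from rfl, XX_succ hc0] at e1 e2
  have hX := XX_pos ha hu (show 0 < p + 3 / 2 by positivity) hc0 m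
  rw [e1, e2, e3]
  set X := XX a u (p + 3 / 2) c m
  have hm : (0:ℝ) ≤ m := by positivity
  push_cast
  have hG : (a + m) * (u + m) ≤ (m + 1) * (c + m) := by nlinarith
  have hG' : (a + (m + 1)) * (u + (m + 1)) ≤ (m + 2) * (c + (m + 1)) := by nlinarith
  have hs : 5 / 4 ≤ a + u := by
    by_contra hcon
    push Not at hcon
    have q1 : a * u ≤ (a + u) ^ 2 / 4 := by nlinarith [sq_nonneg (a - u)]
    have q2 : a + u + 1 / 2 ≤ c := by linarith
    set s := a + u
    have hs0 : 0 < s := by positivity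
    have q3 : c * (s + 1) ≤ s ^ 2 / 4 * (2 + c) := hA2.trans (by gcongr)
    have q4 : c ≤ c * (s + 1 - s ^ 2 / 4) := by
      apply le_mul_of_one_le_right hc0.le
      nlinarith
    nlinarith
  have hH : c ≤ a * u * (1 + 2 / 3 * (w + 1)) := by
    have q5 : 2 + c ≤ (1 + 2 / 3 * (w + 1)) * (a + u + 1) := by rw [hc]; nlinarith
    have q6 : c * (a + u + 1) ≤ a * u * (1 + 2 / 3 * (w + 1)) * (a + u + 1) := by
      calc c * (a + u + 1) ≤ a * u * (2 + c) := hA2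
        _ ≤ a * u * ((1 + 2 / 3 * (w + 1)) * (a + u + 1)) := by gcongr
        _ = _ := by ring
    exact le_of_mul_le_mul_right q6 (by positivity)
  have hK : (1 / 2 - p) ≤ (1 + 2 / 3 * (w + 1)) * (w * p) := by
    have q7 : a * u * (1 / 2 - p) ≤ a * u * ((1 + 2 / 3 * (w + 1)) * (w * p)) := by
      calc a * u * (1 / 2 - p) ≤ c * w * p := hyp
        _ ≤ (a * u * (1 + 2 / 3 * (w + 1))) * w * p := by gcongr
        _ = _ := by ring
    exact le_of_mul_le_mul_left q7 (by positivity)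
  have hK2 : (1 / 2 - p) * (p + 1 / 2) ≤ w * p * (w + 1) * (p + 1) / 2 + (p + 1 / 2) * (w * p) := by
    have q8 : (1 / 2 - p) * (p + 1 / 2) ≤ (1 + 2 / 3 * (w + 1)) * (w * p) * (p + 1 / 2) := by gcongr
    have q9 : w * p * (w + 1) * (2 / 3 * (p + 1 / 2)) ≤ w * p * (w + 1) * ((p + 1) / 2) := by
      gcongr
      linarith
    linarith
  set G := (a + m) * (u + m) with hGd
  set G' := (a + (m + 1)) * (u + (m + 1)) with hGd'
  have g0 : 0 < G := by positivity
  have g1 : 0 < G' := by positivity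
  have y1 : 0 < c + m := by positivity
  have y2 : 0 < c + (m + 1) := by positivity
  have fin : 0 ≤ (m + 1) * (c + m) * ((m + 2) * (c + (m + 1))) * (w * p * (w + 1) * (p + 1) / 2)
      + (m + 2) * (c + (m + 1)) * G * ((p + 1 / 2) * (w * p)) - G * G' * ((1 / 2 - p) * (p + 1 / 2)) := by
    have q10 : G * G' * ((1 / 2 - p) * (p + 1 / 2)) ≤ G * G' * (w * p * (w + 1) * (p + 1) / 2) +
      G' * G * ((p + 1 / 2) * (w * p)) := by
      calc _ ≤ G * G' * (w * p * (w + 1) * (p + 1) / 2 + (p + 1 / 2) * (w * p)) := by gcongr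
        _ = _ := by ring
    have q11 : G * G' * (w * p * (w + 1) * (p + 1) / 2) ≤
      (m + 1) * (c + m) * ((m + 2) * (c + (m + 1))) * (w * p * (w + 1) * (p + 1) / 2) := by gcongr
    have q12 : G' * G * ((p + 1 / 2) * (w * p)) ≤
      (m + 2) * (c + (m + 1)) * G * ((p + 1 / 2) * (w * p)) := by gcongr
    linarith
  have : X * ((m + 2) * (m + 1) / 2 * w * (w + 1) * p * (p + 1)) +
      X * (G * (p + 1 / 2) / (c + m)) * ((m + 1 + 1) * w * p) +
      -(X * (G * (p + 1 / 2) / (c + m)) * (G' * (1 / 2 - p) / (c + (m + 1))))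
     = X * (((m + 1) * (c + m) * ((m + 2) * (c + (m + 1))) * (w * p * (w + 1) * (p + 1) / 2)
      + (m + 2) * (c + (m + 1)) * G * ((p + 1 / 2) * (w * p)) - G * G' * ((1 / 2 - p) * (p + 1 / 2)))
      / ((c + m) * (c + (m + 1)))) := by
    field_simp
    ring
  rw [this]
  positivity

lemma caseB_T {a u p w c : ℝ} (ha : 0 < a) (hp : 0 < p) (hp2 : p < 1 / 2) (hw : 0 < w)
    (hu0 : 0 < u) (hu : u = w + a - p) (hc : c = u + w + a + 1 / 2)
    (hyp : a * u * (1 / 2 - p) ≤ c * w * p)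
    (hB : a * u * (2 + c) < c * (a + u + 1)) (m : ℕ) :
    0 ≤ TT a u p w c (m + 1) 0 + TT a u p w c (m + 1) (m + 1) := by
  have hc0 : 0 < c := by rw [hc]; positivity
  have e0 : ∀ m, TT a u p w c m 0 = poch w m * poch p m := by
    intro m
    unfold TT
    simp [poch_zero]
  induction m with
  | zero =>
    have := two_term (w := w) ha hu0 hp hc0 0 (by simp; linarith)
    simpa using this
  | succ m ih =>
    rw [e0] at *
    have hX := XX_pos ha hu0 (show 0 < p + 1 / 2 by positivity) hc0 m
    have hw1 := poch_pos hw (m + 1)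
    have hp1 := poch_pos hp (m + 1)
    rw [TT_last hc0] at *
    have eX : XX a u (p + 1 / 2) c (m + 1) = XX a u (p + 1 / 2) c m * ((a + m) * (u + m) * (p + 1 / 2 + m) / (c + m)) := by
      have y := (poch_pos hc0 m).ne'
      have y2 : c + m ≠ 0 := by positivity
      unfold XX
      rw [poch_succ a, poch_succ u, poch_succ c, poch_succ (p + 1 / 2)]
      field_simp
    rw [eX, poch_succ w (m + 1), poch_succ p (m + 1)]
    set X := XX a u (p + 1 / 2) c m
    have st := caseB_step ha hp hp2 hw hu0 hu hc hB ((m + 1 : ℕ) : ℝ) (by push_cast; linarith [show (0:ℝ) ≤ m by positivity])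
    have y1 : 0 < c + m := by positivity
    have y2 : 0 < c + (m + 1 : ℕ) := by positivity
    have e : X * ((a + m) * (u + m) * (p + 1 / 2 + m) / (c + m)) * ((a + (m + 1 : ℕ)) * (u + (m + 1 : ℕ)) * (1 / 2 - p) / (c + (m + 1 : ℕ)))
       = X * ((a + m) * (u + m) * (1 / 2 - p) / (c + m)) * ((a + (m + 1 : ℕ)) * (u + (m + 1 : ℕ)) * (p - 1 / 2 + (m + 1 : ℕ)) / (c + (m + 1 : ℕ))) := by
      push_cast
      ring
    have h1 : X * ((a + m) * (u + m) * (1 / 2 - p) / (c + m)) ≤ poch w (m + 1) * poch p (m + 1) := by linarith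
    have h2 : (a + (m + 1 : ℕ)) * (u + (m + 1 : ℕ)) * (p - 1 / 2 + (m + 1 : ℕ)) / (c + (m + 1 : ℕ)) ≤ (w + (m + 1 : ℕ)) * (p + (m + 1 : ℕ)) := by
      rw [div_le_iff₀ y2]
      linarith
    have h3 : X * ((a + m) * (u + m) * (1 / 2 - p) / (c + m)) * ((a + (m + 1 : ℕ)) * (u + (m + 1 : ℕ)) * (p - 1 / 2 + (m + 1 : ℕ)) / (c + (m + 1 : ℕ))) ≤ (poch w (m + 1) * poch p (m + 1)) * ((w + (m + 1 : ℕ)) * (p + (m + 1 : ℕ))) := by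
      apply mul_le_mul h1 h2
      · have : 0 < p - 1 / 2 + (m + 1 : ℕ) := by push_cast; linarith [show (0:ℝ) ≤ m by positivity]
        positivity
      · positivity
    rw [e]
    linarith

lemma TT_pos {a u p w c : ℝ} (ha : 0 < a) (hu : 0 < u) (hp : 0 < p) (hw : 0 < w) (hc : 0 < c)
    (n k : ℕ) (h : k < n) : 0 < TT a u p w c n k := by
  have y1 := poch_pos ha k
  have y2 := poch_pos hu k
  have h1 : (1:ℝ) ≤ (n - k : ℕ) := by
    exact_mod_cast (by omega : 1 ≤ n - k)
  have y3 := poch_pos (show 0 < p - 1 / 2 + (n - k : ℕ) by linarith) k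
  have y4 := poch_pos hw (n - k)
  have y5 := poch_pos hp (n - k)
  have y6 := poch_pos hc k
  have y7 : (0:ℝ) < n.choose k := by exact_mod_cast Nat.choose_pos h.le
  unfold TT
  positivity

lemma sum_pos_aux {f : ℕ → ℝ} {n : ℕ} (s : Finset ℕ) (hs : s ⊆ Finset.range (n + 1)) (hn : n ∈ s)
    (h : 0 ≤ ∑ k ∈ s, f k) (hf : ∀ k < n, 0 ≤ f k) (j : ℕ) (hj : j < n) (hjs : j ∉ s) (hjp : 0 < f j) :
    0 < ∑ k ∈ Finset.range (n + 1), f k := by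
  rw [← Finset.sum_sdiff hs]
  apply add_pos_of_pos_of_nonneg _ h
  apply Finset.sum_pos'
  · intro k hk
    rw [Finset.mem_sdiff, Finset.mem_range] at hk
    apply hf
    have : k ≠ n := fun e => hk.2 (e ▸ hn)
    omega
  · exact ⟨j, by rw [Finset.mem_sdiff, Finset.mem_range]; exact ⟨by omega, hjs⟩, hjp⟩

lemma case_two_small {a u p w c : ℝ} (ha : 0 < a) (hp : 0 < p) (hp2 : p < 1 / 2) (hw : 0 < w)
    (hu0 : 0 ≤ u) (hu : u = w + a - p) (hc : c = u + w + a + 1 / 2)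
    (hyp : a * u * (1 / 2 - p) ≤ c * w * p) (n : ℕ) (hn : 1 ≤ n) :
    0 ≤ ∑ k ∈ Finset.range (n + 1), TT a u p w c n k ∧
      (2 ≤ n → 0 < ∑ k ∈ Finset.range (n + 1), TT a u p w c n k) := by
  have hc0 : 0 < c := by rw [hc]; positivity
  rcases hu0.eq_or_lt with hz | hu0
  · have : 0 < ∑ k ∈ Finset.range (n + 1), TT a u p w c n k := by
      apply sum_pos_aux {n} (by simp) (by simp) _ _ 0 (by omega) (by simp; omega) (TT_zero hp hw n)
      · rw [Finset.sum_singleton]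
        obtain ⟨m, rfl⟩ : ∃ m, n = m + 1 := ⟨n - 1, by omega⟩
        rw [TT, poch_succ_left u, ← hz]
        simp
      · intro k hk
        apply TT_nonneg ha hu0 hp hw.le hc0
        have h1 : (1:ℝ) ≤ (n - k : ℕ) := by
          exact_mod_cast (by omega : 1 ≤ n - k)
        linarith
    exact ⟨this.le, fun _ => this⟩
  have hT : ∀ k < n, 0 ≤ TT a u p w c n k := fun k hk => (TT_pos ha hu0 hp hw hc0 n k hk).le
  rcases hn.eq_or_lt with rfl | hn2
  · refine ⟨?_, by omega⟩
    rw [Finset.sum_range_succ, Finset.sum_range_one]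
    exact two_term ha hu0 hp hc0 0 (by simp; linarith)
  suffices h : 0 < ∑ k ∈ Finset.range (n + 1), TT a u p w c n k from ⟨h.le, fun _ => h⟩
  obtain ⟨m, rfl⟩ : ∃ m, n = m + 2 := ⟨n - 2, by omega⟩
  rcases le_or_gt (c * (a + u + 1)) (a * u * (2 + c)) with hA | hB
  · -- two-term estimate
    have two : (a + (m + 1 : ℕ)) * (u + (m + 1 : ℕ)) * (1 / 2 - p) ≤ ((m + 1 : ℕ) + 1) * w * p * (c + (m + 1 : ℕ)) →
        0 < ∑ k ∈ Finset.range (m + 2 + 1), TT a u p w c (m + 2) k := by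
      intro h
      apply sum_pos_aux {m + 1, m + 2} _ (by simp) _ hT 0 (by omega) (by simp) (TT_zero hp hw _)
      · intro k hk
        simp at hk ⊢
        omega
      · rw [Finset.sum_pair (by omega)]
        exact two_term ha hu0 hp hc0 (m + 1) h
    have two' : c * ((a + (m + 1 : ℕ)) * (u + (m + 1 : ℕ))) ≤ a * u * (((m + 1 : ℕ) + 1) * (c + (m + 1 : ℕ))) →
        0 < ∑ k ∈ Finset.range (m + 2 + 1), TT a u p w c (m + 2) k := by
      intro h
      apply two
      have k1 : 0 < 1 / 2 - p := by linarith
      have : (a * u) * ((a + (m + 1 : ℕ)) * (u + (m + 1 : ℕ)) * (1 / 2 - p)) ≤ (a * u) * (((m + 1 : ℕ) + 1) * w * p * (c + (m + 1 : ℕ))) := by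
        calc (a * u) * ((a + (m + 1 : ℕ)) * (u + (m + 1 : ℕ)) * (1 / 2 - p))
            = (a * u * (1 / 2 - p)) * ((a + (m + 1 : ℕ)) * (u + (m + 1 : ℕ))) := by ring
          _ ≤ (c * w * p) * ((a + (m + 1 : ℕ)) * (u + (m + 1 : ℕ))) := by gcongr
          _ = (w * p) * (c * ((a + (m + 1 : ℕ)) * (u + (m + 1 : ℕ)))) := by ring
          _ ≤ (w * p) * (a * u * (((m + 1 : ℕ) + 1) * (c + (m + 1 : ℕ)))) := by gcongr
          _ = _ := by ring
      exact le_of_mul_le_mul_left this (by positivity)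
    rcases le_or_gt c (a * u) with hA1 | hA1
    · apply two'
      have e : a * u * (((m + 1 : ℕ) + 1) * (c + (m + 1 : ℕ))) - c * ((a + (m + 1 : ℕ)) * (u + (m + 1 : ℕ)))
         = ((m + 1 : ℕ) : ℝ) * (a * u * (2 + c) - c * (a + u + 1)) + ((m + 1 : ℕ) : ℝ) * m * (a * u - c) := by
        push_cast
        ring
      have : 0 ≤ a * u * (2 + c) - c * (a + u + 1) := by linarith
      have : 0 ≤ a * u - c := by linarith
      have : 0 ≤ ((m + 1 : ℕ) : ℝ) * (a * u * (2 + c) - c * (a + u + 1)) + ((m + 1 : ℕ) : ℝ) * m * (a * u - c) := by positivity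
      linarith
    · rcases Nat.eq_zero_or_pos m with rfl | hm
      · apply two'
        push_cast
        linarith
      · apply sum_pos_aux {m, m + 1, m + 2} _ (by simp) _ hT 0 (by omega) (by simp; omega) (TT_zero hp hw _)
        · intro k hk
          simp at hk ⊢
          omega
        · rw [Finset.sum_insert (by simp), Finset.sum_pair (by omega), ← add_assoc]
          exact three_term ha hu0 hp hp2 hw hc hyp hA1 hA m
  · apply sum_pos_aux {0, m + 2} _ (by simp) _ hT (m + 1) (by omega) (by simp)
      (TT_pos ha hu0 hp hw hc0 _ _ (by omega))
    · intro k hk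
      simp at hk ⊢
      omega
    · rw [Finset.sum_pair (by omega)]
      exact caseB_T ha hp hp2 hw hu0 hu hc hyp hB (m + 1)

lemma oneF2_swap (a b c z : ℝ) : oneF2 a b c z = oneF2 a c b z := by
  unfold oneF2
  congr 1
  ext k
  rw [mul_right_comm]

lemma main_le (a b c : ℝ) (ha : 0 < a) (hba : a < b) (hca : a < c) (hbc : b ≤ c)
    (h1 : 3 * a + 1 / 2 - b ≤ c) (h2 : a / 2 ≤ (b - a) * (c - a))
    (hΛ1 : ¬ (b = a + 1 / 2 ∧ c = 2 * a)) (hΛ2 : ¬ (b = 2 * a ∧ c = a + 1 / 2)) (y : ℝ) (hy : 0 < y) :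
    0 < oneF2 a b c (-y) := by
  obtain ⟨μ, hμ⟩ : ∃ μ, μ = b + c - a - 1 / 2 := ⟨_, rfl⟩
  obtain ⟨w, hw⟩ : ∃ w, w = μ / 2 - a := ⟨_, rfl⟩
  obtain ⟨u, hu⟩ : ∃ u, u = c - (μ + 1) / 2 := ⟨_, rfl⟩
  obtain ⟨v, hv⟩ : ∃ v, v = b - (μ + 1) / 2 := ⟨_, rfl⟩
  obtain ⟨p, hp⟩ : ∃ p, p = b - a := ⟨_, rfl⟩
  have hμ0 : 0 < μ := by linarith
  have hb0 : 0 < b := by linarith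
  have hc0 : 0 < c := by linarith
  have hw0 : 0 ≤ w := by linarith
  have hp0 : 0 < p := by linarith
  suffices H : ∀ n, 1 ≤ n → 0 ≤ KK μ (gg μ a b c) n ∧ (2 ≤ n → 0 < KK μ (gg μ a b c) n) by
    apply gasper_pos hμ0 ha hba hc0 _ (fun n hn => (H n (by omega)).2 hn) y hy
    intro n
    rcases Nat.eq_zero_or_pos n with rfl | hn
    · simp [KK, QQ, gg, poch_zero]
    · exact (H n hn).1
  intro n hn
  have huv : v ≤ u := by linarith
  by_cases hcase : (0 < u ∧ 0 < v) ∨ (-1 < u ∧ u < 0 ∧ -1 < v ∧ v < 0)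
  · have := case_one hμ0 hb0 hc0 hμ hw hu hv hw0 hcase n hn
    exact ⟨this.le, fun _ => this⟩
  have hu0 : 0 ≤ u := by
    by_contra hcon
    push Not at hcon
    exact hcase (Or.inr ⟨by linarith, hcon, by linarith, by linarith⟩)
  have hv0 : v ≤ 0 := by
    by_contra hcon
    push Not at hcon
    exact hcase (Or.inl ⟨by linarith, hcon⟩)
  have huw : u = w + a - p := by linarith
  have hcw : c = u + w + a + 1 / 2 := by linarith
  obtain ⟨P, hP, h⟩ := KK_two hμ0 hb0 hc0 hμ hp hw hu n hn
  rw [h]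
  suffices H : 0 ≤ ∑ k ∈ Finset.range (n + 1), TT a u p w c n k ∧
      (2 ≤ n → 0 < ∑ k ∈ Finset.range (n + 1), TT a u p w c n k) from
    ⟨mul_nonneg hP.le H.1, fun hn => mul_pos hP (H.2 hn)⟩
  rcases le_or_gt (1 / 2) p with hp2 | hp2
  · have := case_two_large ha hu0 hp2 hw0 hc0 (by
      rcases hw0.eq_or_lt with hz | hz
      · right
        constructor
        · apply lt_of_le_of_ne hu0
          intro hu1
          exact hΛ2 ⟨by linarith, by linarith⟩
        · apply lt_of_le_of_ne hp2
          intro hp1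
          exact hΛ1 ⟨by linarith, by linarith⟩
      · exact Or.inl hz) n
    exact ⟨this.le, fun _ => this⟩
  · have hq : c - a = 2 * w + a - p + 1 / 2 := by linarith
    have h2' : a / 2 ≤ p * (2 * w + a - p + 1 / 2) := by rw [← hq, hp]; exact h2
    have hyp1 : (1 / 2 - p) * (a - p) ≤ 2 * w * p := by nlinarith
    have hyp : a * u * (1 / 2 - p) ≤ c * w * p := by
      have q1 := mul_le_mul_of_nonneg_left hyp1 ha.le
      have q2 := mul_le_mul_of_nonneg_left h2' hw0
      rw [hcw, huw]
      linarith
    have hw1 : 0 < w := by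
      apply lt_of_le_of_ne hw0
      intro hz
      rw [← hz] at hyp1
      have : a - p ≤ 0 := by
        by_contra hcon
        push Not at hcon
        have := mul_pos (show 0 < 1 / 2 - p by linarith) hcon
        linarith
      exact hΛ2 ⟨by linarith, by linarith⟩
    exact case_two_small ha hp0 hp2 hw1 hu0 huw hcw hyp n hn

theorem stmt4 (a b c : ℝ) (ha : 0 < a) (hb : 0 < b) (hc : 0 < c)
    (hba : a < b) (hca : a < c)
    (hmax : max (3 * a + 1 / 2 - b) (a + a / (2 * (b - a))) ≤ c)
    (hΛ1 : (b, c) ≠ (a + 1 / 2, 2 * a)) (hΛ2 : (b, c) ≠ (2 * a, a + 1 / 2)) :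
    ∀ x : ℝ, 0 < x → 0 < oneF2 a b c (-x ^ 2 / 4) := by
  intro x hx
  obtain ⟨h1, h2⟩ := max_le_iff.mp hmax
  have h2' : a / 2 ≤ (b - a) * (c - a) := by
    have h3 : a / (2 * (b - a)) ≤ c - a := by linarith
    rw [div_le_iff₀ (by linarith)] at h3
    linarith
  have e : -x ^ 2 / 4 = -(x ^ 2 / 4) := by ring
  have hy : 0 < x ^ 2 / 4 := by positivity
  rw [Ne, Prod.mk.injEq] at hΛ1 hΛ2
  rw [e]
  rcases le_total b c with h | h
  · exact main_le a b c ha hba hca h h1 h2' hΛ1 hΛ2 _ hy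
  · rw [oneF2_swap]
    exact main_le a c b ha hca hba h (by linarith) (by linarith) (fun h => hΛ2 ⟨h.2, h.1⟩)
      (fun h => hΛ1 ⟨h.2, h.1⟩) _ hy
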